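/- arXiv:1807.10450 — 2 statements merged into one kernel-verified Lean document; each statement's English description precedes it below -/
import Mathlib

section
/- Let m be a positive integer and let Φ(m) = {k : 1 ≤ k ≤ m, gcd(k,m) = 1}. For all integers n ≥ m, n·ρ(n,m) = (n−m)·ρ(n−m,m) + Σ_{k ∈ Φ(m)} ρ(n−k,m). -/
/-- `rho n m` is the proportion of permutations in `Sym(n)` whose order is coprime to `m`.
Note that `rho 0 m = 1`. -/
noncomputable def rho (n m : ℕ) : ℝ :=
  (Finset.univ.filter (fun π : Equiv.Perm (Fin n) => Nat.Coprime (orderOf π) m)).card /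
    (Nat.factorial n : ℝ)

/-- The centralizer size attached to a multiset of cycle lengths. -/
def zee (s : Multiset ℕ) : ℕ := s.prod * ∏ i ∈ s.toFinset, (s.count i).factorial

theorem zee_cons (k : ℕ) (s : Multiset ℕ) :
    zee (k ::ₘ s) = k * (s.count k + 1) * zee s := by
  classical
  unfold zee
  have h1 : ∏ i ∈ s.toFinset, (s.count i).factorial
      = ∏ i ∈ insert k s.toFinset, (s.count i).factorial := by
    apply Finset.prod_subset (Finset.subset_insert _ _)
    intro x _ hx
    rw [Multiset.mem_toFinset] at hx
    simp [Multiset.count_eq_zero_of_notMem hx]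
  rw [h1, Multiset.toFinset_cons, Multiset.prod_cons,
    ← Finset.mul_prod_erase _ _ (Finset.mem_insert_self k s.toFinset),
    ← Finset.mul_prod_erase _ _ (Finset.mem_insert_self k s.toFinset)]
  have h2 : ∏ i ∈ (insert k s.toFinset).erase k, ((k ::ₘ s).count i).factorial
      = ∏ i ∈ (insert k s.toFinset).erase k, (s.count i).factorial := by
    apply Finset.prod_congr rfl
    intro x hx
    rw [Multiset.count_cons_of_ne (Finset.ne_of_mem_erase hx)]
  rw [h2, Multiset.count_cons_self, Nat.factorial_succ]
  ring

theorem zee_pos (s : Multiset ℕ) (hs : ∀ i ∈ s, 0 < i) : 0 < zee s := by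
  unfold zee
  have : 0 < s.prod := Multiset.prod_pos hs
  positivity

theorem zee_add_replicate (t : Multiset ℕ) (ht : ∀ i ∈ t, 2 ≤ i) (j : ℕ) :
    zee (t + Multiset.replicate j 1) = j.factorial * zee t := by
  induction j with
  | zero => simp
  | succ j ih =>
    have h0 : t.count 1 = 0 := Multiset.count_eq_zero_of_notMem
      (fun h => absurd (ht 1 h) (by norm_num))
    rw [Multiset.replicate_succ, Multiset.add_cons, zee_cons, ih, Multiset.count_add, h0,
      Multiset.count_replicate_self, Nat.factorial_succ]
    ring

/-- Partitions of `n` (as multisets) with all parts coprime to `m`. -/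
def goodParts (n m : ℕ) : Finset (Multiset ℕ) :=
  ((Finset.univ : Finset (Nat.Partition n)).image Nat.Partition.parts).filter
    (fun s => ∀ i ∈ s, Nat.Coprime i m)

theorem mem_goodParts {n m : ℕ} {s : Multiset ℕ} :
    s ∈ goodParts n m ↔ (s.sum = n ∧ ∀ i ∈ s, 0 < i) ∧ ∀ i ∈ s, Nat.Coprime i m := by
  unfold goodParts
  rw [Finset.mem_filter, Finset.mem_image]
  refine and_congr_left fun _ => ⟨?_, ?_⟩
  · rintro ⟨p, _, rfl⟩
    exact ⟨p.parts_sum, fun i hi => p.parts_pos hi⟩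
  · rintro ⟨h1, h2⟩
    exact ⟨⟨s, fun {i} hi => h2 i hi, h1⟩, Finset.mem_univ _, rfl⟩

theorem coprime_lcm_iff (s : Multiset ℕ) (m : ℕ) :
    Nat.Coprime s.lcm m ↔ ∀ i ∈ s, Nat.Coprime i m := by
  constructor
  · intro h i hi
    exact Nat.Coprime.coprime_dvd_left (Multiset.dvd_lcm hi) h
  · induction s using Multiset.induction_on with
    | empty => simp
    | cons a s ih =>
      intro h
      rw [Multiset.lcm_cons]
      have h1 := h a (Multiset.mem_cons_self a s)
      have h2 := ih fun i hi => h i (Multiset.mem_cons_of_mem hi)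
      exact Nat.Coprime.coprime_dvd_left (Nat.lcm_dvd_mul _ _) (Nat.Coprime.mul_left h1 h2)

theorem good_iff {n m : ℕ} (π : Equiv.Perm (Fin n)) :
    Nat.Coprime (orderOf π) m ↔ π.partition.parts ∈ goodParts n m := by
  have hs : π.partition.parts.sum = n := by
    rw [π.partition.parts_sum, Fintype.card_fin]
  have hp : ∀ i ∈ π.partition.parts, 0 < i := fun i hi => π.partition.parts_pos hi
  rw [mem_goodParts, ← Equiv.Perm.lcm_cycleType, coprime_lcm_iff, Equiv.Perm.parts_partition]
  rw [Equiv.Perm.parts_partition] at hs hp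
  constructor
  · intro h
    refine ⟨⟨hs, hp⟩, fun i hi => ?_⟩
    rcases Multiset.mem_add.mp hi with hi | hi
    · exact h i hi
    · rw [Multiset.eq_of_mem_replicate hi]
      exact Nat.coprime_one_left m
  · rintro ⟨_, h⟩ i hi
    exact h i (Multiset.mem_add.mpr (Or.inl hi))

theorem fiber_card {n : ℕ} (s : Multiset ℕ) (hs : s.sum = n) (hp : ∀ i ∈ s, 0 < i) :
    (Finset.univ.filter (fun π : Equiv.Perm (Fin n) => π.partition.parts = s)).card * zee s
      = n.factorial := by
  classical
  set t := s.filter (fun i => 2 ≤ i) with ht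
  have ht2 : ∀ i ∈ t, 2 ≤ i := fun i hi => (Multiset.mem_filter.mp hi).2
  have hst : s = t + Multiset.replicate (n - t.sum) 1 := by
    have h1 : s.filter (fun i => ¬ 2 ≤ i)
        = Multiset.replicate (s.filter (fun i => ¬ 2 ≤ i)).card 1 := by
      rw [Multiset.eq_replicate]
      refine ⟨rfl, fun b hb => ?_⟩
      have h3 := Multiset.mem_filter.mp hb
      have h4 := hp b h3.1
      have h5 := h3.2
      omega
    have h2 := Multiset.filter_add_not (fun i => 2 ≤ i) s
    rw [h1, ← ht] at h2
    have h3 := congrArg Multiset.sum h2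
    rw [Multiset.sum_add, Multiset.sum_replicate, hs, smul_eq_mul, mul_one] at h3
    rw [← h3, Nat.add_sub_cancel_left]
    exact h2.symm
  have hle : t.sum ≤ n := by
    have h3 := congrArg Multiset.sum hst
    rw [Multiset.sum_add, hs] at h3
    omega
  have hf : (Finset.univ.filter (fun π : Equiv.Perm (Fin n) => π.partition.parts = s))
      = (Finset.univ.filter (fun π : Equiv.Perm (Fin n) => π.cycleType = t)) := by
    ext π
    simp only [Finset.mem_filter, Finset.mem_univ, true_and]
    constructor
    · intro h
      rw [← Equiv.Perm.filter_parts_partition_eq_cycleType, h]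
    · intro h
      rw [Equiv.Perm.parts_partition, ← Equiv.Perm.sum_cycleType, h, Fintype.card_fin]
      exact hst.symm
  have hc := Equiv.Perm.card_of_cycleType_mul_eq (Fin n) t
  rw [Fintype.card_fin, if_pos ⟨hle, ht2⟩] at hc
  rw [hf, hst, zee_add_replicate t ht2, ← hc]
  unfold zee
  rw [mul_assoc (Nat.factorial _)]

theorem rho_eq (n m : ℕ) : rho n m = ∑ s ∈ goodParts n m, (1 : ℝ) / zee s := by
  classical
  unfold rho
  rw [Finset.card_eq_sum_card_fiberwise (f := fun π : Equiv.Perm (Fin n) => π.partition.parts)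
    (t := goodParts n m)
    (fun π hπ => (good_iff π).mp (Finset.mem_filter.mp (Finset.mem_coe.mp hπ)).2)]
  rw [Nat.cast_sum, Finset.sum_div]
  apply Finset.sum_congr rfl
  intro s hs
  have hs' := mem_goodParts.mp hs
  have h1 : ((Finset.univ.filter
      (fun π : Equiv.Perm (Fin n) => Nat.Coprime (orderOf π) m)).filter
      (fun π => π.partition.parts = s))
      = Finset.univ.filter (fun π : Equiv.Perm (Fin n) => π.partition.parts = s) := by
    ext π
    simp only [Finset.mem_filter, Finset.mem_univ, true_and, and_iff_right_iff_imp]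
    intro h
    rw [good_iff, h]
    exact hs
  rw [h1, ← fiber_card s hs'.1.1 hs'.1.2]
  have hz : (zee s : ℝ) ≠ 0 := by exact_mod_cast (zee_pos s hs'.1.2).ne'
  have hn : ((Finset.univ.filter
      (fun π : Equiv.Perm (Fin n) => π.partition.parts = s)).card : ℝ) ≠ 0 := by
    intro h
    have h0 := fiber_card s hs'.1.1 hs'.1.2
    rw [Nat.cast_eq_zero.mp h, zero_mul] at h0
    exact (Nat.factorial_ne_zero n) h0.symm
  push_cast
  field_simp

theorem rho_rec (n m : ℕ) :
    (n : ℝ) * rho n m = ∑ k ∈ (Finset.Icc 1 n).filter (fun k => Nat.Coprime k m),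
      rho (n - k) m := by
  classical
  simp only [rho_eq]
  rw [Finset.mul_sum]
  have h1 : ∀ s ∈ goodParts n m, (n : ℝ) * (1 / zee s)
      = ∑ k ∈ s.toFinset, (1 : ℝ) / zee (s.erase k) := by
    intro s hs
    obtain ⟨⟨hsum, hpos⟩, hc⟩ := mem_goodParts.mp hs
    have h2 : (n : ℝ) = ∑ k ∈ s.toFinset, (s.count k : ℝ) * k := by
      rw [← hsum, Finset.sum_multiset_count]
      push_cast
      simp
    rw [h2, Finset.sum_mul]
    apply Finset.sum_congr rfl
    intro k hk
    have hk' := Multiset.mem_toFinset.mp hk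
    have h3 := zee_cons k (s.erase k)
    rw [Multiset.cons_erase hk', Multiset.count_erase_self] at h3
    have h4 : 0 < s.count k := Multiset.count_pos.mpr hk'
    rw [Nat.sub_add_cancel h4] at h3
    have h5 : (zee (s.erase k) : ℝ) ≠ 0 := by
      exact_mod_cast (zee_pos _ fun i hi => hpos i (Multiset.mem_of_mem_erase hi)).ne'
    have h6 : (s.count k : ℝ) ≠ 0 := by exact_mod_cast h4.ne'
    have h7 : (k : ℝ) ≠ 0 := by exact_mod_cast (hpos k hk').ne'
    rw [h3]
    push_cast
    field_simp
  rw [Finset.sum_congr rfl h1, Finset.sum_sigma', Finset.sum_sigma']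
  refine Finset.sum_bij' (fun x _ => ⟨x.2, x.1.erase x.2⟩) (fun y _ => ⟨y.1 ::ₘ y.2, y.1⟩)
    ?_ ?_ ?_ ?_ ?_
  · rintro ⟨s, k⟩ h
    simp only [Finset.mem_sigma, Multiset.mem_toFinset, mem_goodParts, Finset.mem_filter,
      Finset.mem_Icc] at h ⊢
    obtain ⟨⟨⟨hsum, hpos⟩, hc⟩, hk⟩ := h
    have h2 : k + (s.erase k).sum = n := by
      rw [Multiset.sum_erase hk, hsum]
    have h3 := hpos k hk
    exact ⟨⟨⟨h3, by omega⟩, hc k hk⟩,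
      ⟨by omega, fun i hi => hpos i (Multiset.mem_of_mem_erase hi)⟩,
      fun i hi => hc i (Multiset.mem_of_mem_erase hi)⟩
  · rintro ⟨k, t⟩ h
    simp only [Finset.mem_sigma, Multiset.mem_toFinset, mem_goodParts, Finset.mem_filter,
      Finset.mem_Icc] at h ⊢
    obtain ⟨⟨⟨hk1, hkn⟩, hkc⟩, ⟨hsum, hpos⟩, hc⟩ := h
    refine ⟨⟨⟨?_, ?_⟩, ?_⟩, Multiset.mem_cons_self _ _⟩
    · rw [Multiset.sum_cons]
      omega
    · intro i hi
      rcases Multiset.mem_cons.mp hi with rfl | hi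
      · exact hk1
      · exact hpos i hi
    · intro i hi
      rcases Multiset.mem_cons.mp hi with rfl | hi
      · exact hkc
      · exact hc i hi
  · rintro ⟨s, k⟩ h
    simp only [Finset.mem_sigma, Multiset.mem_toFinset] at h
    simp only [Multiset.cons_erase h.2]
  · rintro ⟨k, t⟩ h
    simp only [Multiset.erase_cons_head]
  · rintro ⟨s, k⟩ h
    rfl

theorem stmt_3 (m : ℕ) (hm : 0 < m) :
    ∀ n : ℕ, m ≤ n →
      (n : ℝ) * rho n m =
        ((n - m : ℕ) : ℝ) * rho (n - m) m +
          ∑ k ∈ (Finset.Icc 1 m).filter (fun k => Nat.Coprime k m), rho (n - k) m := by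
  intro n hn
  rw [rho_rec n m, rho_rec (n - m) m]
  have hsplit : (Finset.Icc 1 n).filter (fun k => Nat.Coprime k m)
      = (((Finset.Icc 1 (n - m)).filter (fun k => Nat.Coprime k m)).map
          (addRightEmbedding m)) ∪ (Finset.Icc 1 m).filter (fun k => Nat.Coprime k m) := by
    ext k
    simp only [Finset.mem_union, Finset.mem_map, Finset.mem_filter, Finset.mem_Icc,
      addRightEmbedding_apply]
    constructor
    · rintro ⟨⟨h1, h2⟩, h3⟩
      by_cases hk : k ≤ m
      · exact Or.inr ⟨⟨h1, hk⟩, h3⟩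
      · refine Or.inl ⟨k - m, ⟨⟨by omega, by omega⟩, ?_⟩, by omega⟩
        rw [← Nat.coprime_add_self_left, Nat.sub_add_cancel (by omega)]
        exact h3
    · rintro (⟨j, ⟨⟨h1, h2⟩, h3⟩, rfl⟩ | ⟨⟨h1, h2⟩, h3⟩)
      · exact ⟨⟨by omega, by omega⟩, Nat.coprime_add_self_left.mpr h3⟩
      · exact ⟨⟨h1, by omega⟩, h3⟩
  rw [hsplit, Finset.sum_union ?_, Finset.sum_map]
  · congr 1
    apply Finset.sum_congr rfl
    intro k _
    rw [addRightEmbedding_apply, Nat.sub_sub, Nat.add_comm]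
  · rw [Finset.disjoint_left]
    intro k hk hk'
    simp only [Finset.mem_map, Finset.mem_filter, Finset.mem_Icc,
      addRightEmbedding_apply] at hk hk'
    omega
end

section
/- Let p be a prime and let f(n,p) = ρ(n,p)·(n/p)^(1 − φ(p)/p) = ρ(n,p)·(n/p)^(1/p). For every integer b with 0 ≤ b ≤ ⌊(p−1)/2⌋, the sequence a ↦ f(ap + b, p) is strictly increasing for integers a ≥ 0, i.e. f(ap+b, p) < f((a+1)p + b, p) for all integers a ≥ 0. -/
/-- `f n p = ρ(n,p) · (n/p)^(1 − φ(p)/p)`. -/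
noncomputable def f (n p : ℕ) : ℝ :=
  rho n p * ((n : ℝ) / p) ^ ((1 : ℝ) - (Nat.totient p : ℝ) / p)

/-- multisets of parts not divisible by `p`, with sum `n` -/
noncomputable def goodP (n p : ℕ) : Finset (Multiset ℕ) :=
  ((Finset.univ : Finset n.Partition).image Nat.Partition.parts).filter (fun m => ∀ k ∈ m, ¬ p ∣ k)

/-- centralizer order -/
def cenD (m : Multiset ℕ) : ℕ := m.prod * ∏ k ∈ m.toFinset, (m.count k).factorial

noncomputable def wt (m : Multiset ℕ) : ℝ := 1 / (cenD m : ℝ)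

theorem mem_goodP (n p : ℕ) (m : Multiset ℕ) :
    m ∈ goodP n p ↔ m.sum = n ∧ ∀ k ∈ m, ¬ p ∣ k := by
  unfold goodP
  simp only [Finset.mem_filter, Finset.mem_image, Finset.mem_univ, true_and]
  constructor
  · rintro ⟨⟨q, rfl⟩, h⟩
    exact ⟨q.parts_sum, h⟩
  · rintro ⟨h1, h2⟩
    refine ⟨⟨⟨m, ?_, h1⟩, rfl⟩, h2⟩
    intro i hi
    rcases Nat.eq_zero_or_pos i with h | h
    · exact absurd (h ▸ dvd_zero p) (h2 i hi)
    · exact h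

theorem cenD_superset (m : Multiset ℕ) (S : Finset ℕ) (h : m.toFinset ⊆ S) :
    cenD m = m.prod * ∏ k ∈ S, (m.count k).factorial := by
  unfold cenD
  congr 1
  apply Finset.prod_subset h
  intro x _ hx
  rw [Multiset.mem_toFinset] at hx
  simp [Multiset.count_eq_zero_of_notMem hx]

theorem cenD_cons (k : ℕ) (m : Multiset ℕ) :
    cenD (k ::ₘ m) = k * (m.count k + 1) * cenD m := by
  rw [cenD_superset (k ::ₘ m) (insert k (m.toFinset)) (by simp),
    cenD_superset m (insert k (m.toFinset)) (by simp),
    ← Finset.mul_prod_erase _ _ (Finset.mem_insert_self k m.toFinset),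
    ← Finset.mul_prod_erase _ (fun x => (m.count x).factorial) (Finset.mem_insert_self k m.toFinset)]
  have : ∏ x ∈ (insert k m.toFinset).erase k, ((k ::ₘ m).count x).factorial
      = ∏ x ∈ (insert k m.toFinset).erase k, (m.count x).factorial := by
    apply Finset.prod_congr rfl
    intro x hx
    rw [Multiset.count_cons_of_ne (Finset.ne_of_mem_erase hx)]
  rw [this, Multiset.count_cons_self, Multiset.prod_cons, Nat.factorial_succ]
  ring

theorem wt_erase (k : ℕ) (m : Multiset ℕ) (hk : k ∈ m) (h0 : k ≠ 0) :
    (m.count k * k : ℝ) * wt m = wt (m.erase k) := by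
  obtain ⟨m', rfl⟩ := Multiset.exists_cons_of_mem hk
  unfold wt
  rw [Multiset.erase_cons_head, cenD_cons, Multiset.count_cons_self]
  have : (k : ℝ) ≠ 0 := by exact_mod_cast h0
  have h2 : ((m'.count k : ℝ) + 1) ≠ 0 := by positivity
  push_cast
  by_cases h3 : (cenD m' : ℝ) = 0
  · simp [h3]
  · field_simp

theorem cenD_add_replicate (c : Multiset ℕ) (r : ℕ) (hc : 1 ∉ c) :
    cenD (c + Multiset.replicate r 1) = r.factorial * c.prod *
      ∏ k ∈ c.toFinset, (c.count k).factorial := by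
  induction r with
  | zero => simp [cenD]
  | succ r ih =>
    rw [Multiset.replicate_succ, Multiset.add_cons, cenD_cons, ih, Nat.factorial_succ]
    simp [Multiset.count_eq_zero_of_notMem hc]
    ring

theorem cenD_pos (m : Multiset ℕ) (h : ∀ k ∈ m, 0 < k) : 0 < cenD m := by
  unfold cenD
  have : 0 < m.prod := Multiset.prod_pos h
  positivity

theorem split_ones (m : Multiset ℕ) (h : ∀ k ∈ m, 0 < k) :
    m = m.filter (fun k => 2 ≤ k) + Multiset.replicate (m.count 1) 1 := by
  conv_lhs => rw [← Multiset.filter_add_not (fun k => 2 ≤ k) m]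
  congr 1
  rw [← Multiset.filter_eq' m 1]
  apply Multiset.filter_congr
  intro x hx
  have := h x hx
  omega

open Classical in
theorem rho_eq_s7 (n p : ℕ) (hp : p.Prime) : rho n p = ∑ m ∈ goodP n p, wt m := by
  have hgood : ∀ g : Equiv.Perm (Fin n), Nat.Coprime (orderOf g) p ↔
      ∀ k ∈ g.cycleType, ¬ p ∣ k := by
    intro g
    rw [Nat.coprime_comm, hp.coprime_iff_not_dvd, ← Equiv.Perm.lcm_cycleType]
    generalize g.cycleType = m
    induction m using Multiset.induction_on with
    | empty => simp [hp.one_lt.ne']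
    | cons a s ih =>
      rw [Multiset.lcm_cons]
      have : p ∣ lcm a s.lcm ↔ p ∣ a ∨ p ∣ s.lcm := by
        constructor
        · intro h
          exact hp.dvd_mul.1 (h.trans (Nat.lcm_dvd_mul a s.lcm))
        · rintro (h | h)
          · exact h.trans (dvd_lcm_left _ _)
          · exact h.trans (dvd_lcm_right _ _)
      rw [this, not_or, ih]
      simp
  have hmap : ∀ g : Equiv.Perm (Fin n), g.partition.parts =
      g.cycleType + Multiset.replicate (n - g.cycleType.sum) 1 := by
    intro g
    rw [Equiv.Perm.parts_partition, Equiv.Perm.sum_cycleType, Fintype.card_fin]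
  unfold rho
  rw [Finset.card_eq_sum_card_fiberwise (t := goodP n p) (f := fun g => g.partition.parts)]
  · push_cast
    rw [Finset.sum_div]
    apply Finset.sum_congr rfl
    intro m hm
    rw [mem_goodP] at hm
    obtain ⟨hs, hd⟩ := hm
    have hpos : ∀ k ∈ m, 0 < k := by
      intro k hk
      rcases Nat.eq_zero_or_pos k with h | h
      · exact absurd (h ▸ dvd_zero p) (hd k hk)
      · exact h
    have hsp := split_ones m hpos
    set c := m.filter (fun k => 2 ≤ k) with hc
    set r := m.count 1 with hr
    have hc2 : ∀ a ∈ c, 2 ≤ a := fun a ha => (Multiset.mem_filter.1 ha).2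
    have hsum : c.sum + r = n := by
      rw [← hs]; conv_rhs => rw [hsp]
      simp
    have hset : ((Finset.univ.filter (fun π : Equiv.Perm (Fin n) =>
        Nat.Coprime (orderOf π) p)).filter (fun g => g.partition.parts = m))
        = Finset.univ.filter (fun g : Equiv.Perm (Fin n) => g.cycleType = c) := by
      ext g
      simp only [Finset.mem_filter, Finset.mem_univ, true_and]
      constructor
      · rintro ⟨_, h⟩
        rw [← Equiv.Perm.filter_parts_partition_eq_cycleType, h]
      · intro h
        constructor
        · rw [hgood, h]
          intro k hk
          exact hd k (Multiset.mem_filter.1 hk).1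
        · rw [hmap, h]
          conv_rhs => rw [hsp]
          congr 2
          omega
    have hcard := Equiv.Perm.card_of_cycleType_mul_eq (Fin n) c
    rw [if_pos ⟨by rw [Fintype.card_fin]; omega, hc2⟩, Fintype.card_fin] at hcard
    have hD := cenD_add_replicate c r (fun h => by have := hc2 1 h; omega)
    rw [← hsp] at hD
    have : n - c.sum = r := by omega
    rw [this, ← hD] at hcard
    have hDp := cenD_pos m hpos
    rw [wt, div_eq_div_iff (by positivity) (by positivity), one_mul, ← hcard]
    push_cast
    congr 2
    rw [← hset]
  · intro g hg
    simp only [Finset.coe_filter, Finset.mem_univ, true_and, Set.mem_ofPred_eq] at hg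
    rw [hgood] at hg
    rw [Finset.mem_coe, mem_goodP]
    refine ⟨by simpa using g.partition.parts_sum, ?_⟩
    intro k hk
    beta_reduce at hk
    rw [hmap, Multiset.mem_add] at hk
    rcases hk with hk | hk
    · exact hg k hk
    · rw [Multiset.eq_of_mem_replicate hk]
      exact hp.one_lt.ne' ∘ Nat.dvd_one.1

theorem rec_goodP (n p : ℕ) : (n : ℝ) * ∑ m ∈ goodP n p, wt m =
    ∑ k ∈ Finset.range n, if p ∣ k + 1 then 0 else ∑ m ∈ goodP (n - (k + 1)) p, wt m := by
  have h1 : ∀ m ∈ goodP n p, (n : ℝ) * wt m =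
      ∑ k ∈ Finset.range n, if (k + 1) ∈ m then wt (m.erase (k + 1)) else 0 := by
    intro m hm
    rw [mem_goodP] at hm
    obtain ⟨hs, hd⟩ := hm
    have h2 : (n : ℝ) = ∑ k ∈ Finset.range (n + 1), (m.count k * k : ℝ) := by
      have : n = ∑ k ∈ Finset.range (n + 1), m.count k * k := by
        conv_lhs => rw [← hs, Finset.sum_multiset_count]
        simp only [smul_eq_mul]
        apply Finset.sum_subset
        · intro x hx
          rw [Multiset.mem_toFinset] at hx
          have := Multiset.le_sum_of_mem hx
          rw [Finset.mem_range]; omega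
        · intro x _ hx
          rw [Multiset.mem_toFinset] at hx
          simp [Multiset.count_eq_zero_of_notMem hx]
      exact_mod_cast this
    rw [h2, Finset.sum_range_succ']
    simp only [Nat.cast_zero, mul_zero, add_zero]
    rw [Finset.sum_mul]
    apply Finset.sum_congr rfl
    intro k _
    split_ifs with hk
    · exact wt_erase _ _ hk (by omega)
    · simp [Multiset.count_eq_zero_of_notMem hk]
  rw [Finset.mul_sum, Finset.sum_congr rfl h1, Finset.sum_comm]
  apply Finset.sum_congr rfl
  intro k hk
  rw [Finset.mem_range] at hk
  split_ifs with hpk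
  · apply Finset.sum_eq_zero
    intro m hm
    rw [mem_goodP] at hm
    rw [if_neg]
    exact fun h => hm.2 _ h hpk
  · rw [← Finset.sum_filter]
    apply Finset.sum_nbij' (fun m => m.erase (k + 1)) (fun m => (k + 1) ::ₘ m)
    · intro m hm
      simp only [Finset.mem_filter, mem_goodP] at hm ⊢
      obtain ⟨⟨h1, h2⟩, h3⟩ := hm
      refine ⟨?_, fun x hx => h2 x (Multiset.mem_of_mem_erase hx)⟩
      have := Multiset.sum_erase h3
      omega
    · intro m hm
      simp only [Finset.mem_filter, mem_goodP] at hm ⊢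
      obtain ⟨h1, h2⟩ := hm
      refine ⟨⟨?_, ?_⟩, Multiset.mem_cons_self _ _⟩
      · rw [Multiset.sum_cons]; omega
      · intro x hx
        rcases Multiset.mem_cons.1 hx with rfl | hx
        · exact hpk
        · exact h2 x hx
    · intro m hm
      exact Multiset.cons_erase (Finset.mem_filter.1 hm).2
    · intro m hm
      exact Multiset.erase_cons_head _ _
    · intro m hm
      rfl

noncomputable def Rprod (p a : ℕ) : ℝ := ∏ k ∈ Finset.range a, (1 - 1 / (((k : ℝ) + 1) * p))

theorem rho_rec_s7 (n p : ℕ) (hp : p.Prime) : (n : ℝ) * rho n p =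
    ∑ k ∈ Finset.range n, if p ∣ k + 1 then 0 else rho (n - (k + 1)) p := by
  rw [rho_eq_s7 n p hp, rec_goodP]
  simp only [rho_eq_s7 _ p hp]

theorem rho_rec2 (q p : ℕ) (hp : p.Prime) : ((q + p : ℕ) : ℝ) * rho (q + p) p =
    (q : ℝ) * rho q p + ∑ k ∈ Finset.range (p - 1), rho (q + p - (k + 1)) p := by
  rw [rho_rec_s7 _ p hp, rho_rec_s7 q p hp, add_comm q p, Finset.sum_range_add, add_comm]
  congr 1
  · apply Finset.sum_congr rfl
    intro k _
    have h1 : p ∣ p + k + 1 ↔ p ∣ k + 1 := by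
      rw [add_assoc]; exact Nat.dvd_add_right (dvd_refl p)
    have h2 : p + q - (p + k + 1) = q - (k + 1) := by omega
    simp only [h1, h2]
  · have := hp.pos
    conv_lhs => rw [show p = (p - 1) + 1 by omega]
    rw [Finset.sum_range_succ]
    have h0 : p - 1 + 1 = p := by omega
    simp only [h0, dvd_refl, if_true, add_zero]
    apply Finset.sum_congr rfl
    intro k hk
    rw [Finset.mem_range] at hk
    rw [if_neg (fun h => by have := Nat.le_of_dvd (by omega) h; omega)]

theorem rho_zero (p : ℕ) : rho 0 p = 1 := by
  unfold rho
  have : (Finset.univ.filter (fun π : Equiv.Perm (Fin 0) => Nat.Coprime (orderOf π) p))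
      = Finset.univ := by
    ext π
    simp [Subsingleton.elim π 1]
  rw [this]
  simp

theorem rho_prod (p : ℕ) (hp : p.Prime) (a : ℕ) :
    ∀ b, b < p → rho (a * p + b) p = Rprod p a := by
  have hp0 := hp.pos
  have hpR : (0 : ℝ) < p := by exact_mod_cast hp0
  induction a with
  | zero =>
    intro b
    induction b using Nat.strong_induction_on with
    | _ b ih =>
      intro hb
      rw [zero_mul, zero_add] at *
      rcases Nat.eq_zero_or_pos b with rfl | hb0
      · rw [rho_zero]; simp [Rprod]
      · have h := rho_rec_s7 b p hp
        have h2 : ∑ k ∈ Finset.range b, (if p ∣ k + 1 then 0 else rho (b - (k + 1)) p)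
            = ∑ k ∈ Finset.range b, (1 : ℝ) := by
          apply Finset.sum_congr rfl
          intro k hk
          rw [Finset.mem_range] at hk
          rw [if_neg (fun h => by have := Nat.le_of_dvd (by omega) h; omega)]
          have := ih (b - (k + 1)) (by omega) (by omega)
          rw [zero_add] at this
          rw [this]; simp [Rprod]
        rw [h2] at h
        have hbR : (b : ℝ) ≠ 0 := by exact_mod_cast hb0.ne'
        simp only [Finset.sum_const, Finset.card_range, nsmul_eq_mul] at h
        rw [mul_left_cancel₀ hbR h]
        simp [Rprod]
  | succ a iha =>
    intro b
    induction b using Nat.strong_induction_on with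
    | _ b ih =>
      intro hb
      have h := rho_rec2 (a * p + b) p hp
      have hn : a * p + b + p = (a + 1) * p + b := by ring
      rw [hn, iha b hb] at h
      have hs : ∑ k ∈ Finset.range (p - 1), rho ((a + 1) * p + b - (k + 1)) p
          = b * Rprod p (a + 1) + ((p : ℝ) - 1 - b) * Rprod p a := by
        rw [show p - 1 = b + (p - 1 - b) by omega, Finset.sum_range_add]
        have e1 : ∀ k ∈ Finset.range b, rho ((a + 1) * p + b - (k + 1)) p = Rprod p (a + 1) := by
          intro k hk
          rw [Finset.mem_range] at hk
          rw [← ih (b - (k + 1)) (by omega) (by omega)]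
          congr 1; omega
        have e2 : ∀ k ∈ Finset.range (p - 1 - b),
            rho ((a + 1) * p + b - (b + k + 1)) p = Rprod p a := by
          intro k hk
          rw [Finset.mem_range] at hk
          rw [← iha (p - (k + 1)) (by omega)]
          congr 1
          rw [← hn]; omega
        rw [Finset.sum_congr rfl e1, Finset.sum_congr rfl e2]
        simp only [Finset.sum_const, Finset.card_range, nsmul_eq_mul]
        rw [Nat.cast_sub (by omega), Nat.cast_sub (by omega)]
        simp
      rw [hs] at h
      have hR : Rprod p (a + 1) = Rprod p a * (1 - 1 / (((a : ℝ) + 1) * p)) := by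
        unfold Rprod; rw [Finset.prod_range_succ]
      have hR' : ((a : ℝ) + 1) * p * Rprod p (a + 1) = (((a : ℝ) + 1) * p - 1) * Rprod p a := by
        rw [hR]; field_simp
      have hnz : (((a + 1) * p + b : ℕ) : ℝ) ≠ 0 := by positivity
      apply mul_left_cancel₀ hnz
      rw [h]
      push_cast
      linear_combination -hR'

theorem pow_bound (t : ℝ) (ht : 1 < t) (p : ℕ) :
    (2 * t - (p + 1) - 1) / (2 * t + (p + 1) - 1) ≤ ((t - 1) / t) ^ (p + 1) ∧
    (1 ≤ p → (2 * t - (p + 1) - 1) / (2 * t + (p + 1) - 1) < ((t - 1) / t) ^ (p + 1)) := by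
  have key : ∀ q : ℕ, (2 * t - ((q + 1 : ℕ) + 1) - 1) / (2 * t + ((q + 1 : ℕ) + 1) - 1) <
      (2 * t - (q + 1) - 1) / (2 * t + (q + 1) - 1) * ((t - 1) / t) := by
    intro q
    have hq : (0 : ℝ) ≤ q := Nat.cast_nonneg q
    push_cast
    rw [div_mul_div_comm, div_lt_div_iff₀ (by linarith) (by apply mul_pos <;> linarith)]
    nlinarith
  have h0 : 0 ≤ (t - 1) / t := div_nonneg (by linarith) (by linarith)
  induction p with
  | zero =>
    refine ⟨?_, by omega⟩
    rw [zero_add, pow_one, div_le_div_iff₀ (by push_cast; linarith) (by linarith)]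
    push_cast
    linarith
  | succ q ih =>
    have := (key q).trans_le (mul_le_mul_of_nonneg_right ih.1 h0)
    rw [← pow_succ] at this
    exact ⟨this.le, fun _ => this⟩

theorem stmt_7 (p : ℕ) (hp : p.Prime) (b : ℕ) (hb : b ≤ (p - 1) / 2) :
    ∀ a : ℕ, f (a * p + b) p < f ((a + 1) * p + b) p := by
  intro a
  have hp2 := hp.two_le
  have hpR : (2 : ℝ) ≤ p := by exact_mod_cast hp2
  have hp0 : (0 : ℝ) < p := by linarith
  have hbR : (b : ℝ) ≤ (p - 1) / 2 := by
    have : 2 * b + 1 ≤ p := by omega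
    have : (2 * b + 1 : ℝ) ≤ p := by exact_mod_cast this
    linarith
  have hb0 : (0 : ℝ) ≤ b := Nat.cast_nonneg b
  have ha0 : (0 : ℝ) ≤ a := Nat.cast_nonneg a
  have hRpos : 0 < Rprod p a := by
    unfold Rprod
    apply Finset.prod_pos
    intro k _
    have : (0 : ℝ) ≤ k := Nat.cast_nonneg k
    rw [sub_pos, div_lt_one (by positivity)]
    nlinarith
  have hR : Rprod p (a + 1) = Rprod p a * (1 - 1 / (((a : ℝ) + 1) * p)) := by
    unfold Rprod; rw [Finset.prod_range_succ]
  have hexp : (1 : ℝ) - (Nat.totient p : ℝ) / p = 1 / p := by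
    rw [Nat.totient_prime hp, Nat.cast_sub (by omega)]
    field_simp
    simp
  unfold f
  rw [rho_prod p hp a b (by omega), rho_prod p hp (a + 1) b (by omega), hR, hexp, mul_assoc]
  apply mul_lt_mul_of_pos_left _ hRpos
  set t : ℝ := ((a : ℝ) + 1) * p with ht
  have htp : (p : ℝ) ≤ t := by nlinarith
  have ht0 : 0 < t := by linarith
  have hu : 0 ≤ (t - 1) / t := div_nonneg (by linarith) (by linarith)
  have e : 1 - 1 / t = ((((t - 1) / t) ^ p : ℝ)) ^ (1 / (p : ℝ)) := by
    rw [one_div (p : ℝ), Real.pow_rpow_inv_natCast hu (by omega)]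
    field_simp
  rw [e, ← Real.mul_rpow (by positivity) (by positivity)]
  apply Real.rpow_lt_rpow (by positivity) _ (by positivity)
  have hb2 := (pow_bound t (by linarith) (p - 1)).2 (by omega)
  rw [show p - 1 + 1 = p by omega, Nat.cast_sub (by omega)] at hb2
  have hle : (a * p + b : ℝ) / (t + b) ≤
      (2 * t - ((p : ℝ) - (1 : ℕ) + 1) - 1) / (2 * t + ((p : ℝ) - (1 : ℕ) + 1) - 1) := by
    rw [show (a : ℝ) * p = t - p by rw [ht]; ring]
    push_cast
    rw [div_le_div_iff₀ (by linarith) (by linarith)]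
    nlinarith
  have := hle.trans_lt hb2
  rw [div_lt_iff₀ (by linarith)] at this
  rw [← mul_div_assoc]
  push_cast
  rw [← ht]
  gcongr
end
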